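/- Let ã : ℤ^d → ℝ satisfy: ã_η ≤ 0 for every η ≠ 0; ã_η = ã_{−η} for all η; Σ_{η∈ℤ^d} e^{c|η|} |ã_η| < ∞ for every c > 0; and the real span of {η ∈ ℤ^d : ã_η < 0} is all of ℝ^d. Then t̃(ξ) := −Σ_{η∈ℤ^d} ã_η cosh(η·ξ) defines a smooth function on ℝ^d and there exists α > 0 such that ⟨v, D² t̃(ξ) v⟩ ≥ α |v|² for all ξ, v ∈ ℝ^d. -/

import Mathlib

open scoped RealInnerProductSpace Classical
noncomputable section

/-- `ℝ^d` as a Euclidean space. -/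
abbrev Ed (d : ℕ) := EuclideanSpace ℝ (Fin d)

/-- The lattice vector `η ∈ ℤ^d` regarded as a vector of `ℝ^d`. -/
def zv {d : ℕ} (η : Fin d → ℤ) : Ed d :=
  (EuclideanSpace.equiv (Fin d) ℝ).symm (fun i => (η i : ℝ))

/-!
Differentiating termwise, the Hessian of `ξ ↦ ∑ bᵢ cosh ⟪wᵢ, ξ⟫` is the quadratic form
`v ↦ ∑ bᵢ cosh ⟪wᵢ, ξ⟫ ⟪wᵢ, v⟫²`. Since `bᵢ ≥ 0` and `cosh ≥ 1 = cosh 0`, it dominates its value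
at `ξ = 0`, so a single quadratic form has to be bounded below. That form is positive definite
because a vector orthogonal to a spanning set vanishes, and it is then coercive by compactness of
the unit sphere.
-/

open scoped ContDiff Topology Nat

variable {ι E F : Type*}

section TermwiseDifferentiation

variable [NormedAddCommGroup E] [NormedSpace ℝ E] [NormedAddCommGroup F] [NormedSpace ℝ F]
  {f : ι → E → F}

/-- The hypothesis of the Weierstrass M-test for termwise differentiation of `∑' i, f i` to all
orders. The majorant may depend on the point: `contDiff_tsum` asks for a global one, which families
such as `cosh (ℓ i x)` do not have. -/
def LocallyDominatedIteratedFDeriv (f : ι → E → F) : Prop :=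
  ∀ (k : ℕ) (x : E), ∃ u : ι → ℝ, Summable u ∧
    ∀ᶠ y in 𝓝 x, ∀ i, ‖iteratedFDeriv ℝ k (f i) y‖ ≤ u i

namespace LocallyDominatedIteratedFDeriv

variable [CompleteSpace F]

theorem summable_iteratedFDeriv (h : LocallyDominatedIteratedFDeriv f) (k : ℕ) (x : E) :
    Summable fun i => iteratedFDeriv ℝ k (f i) x := by
  obtain ⟨u, hu, hfu⟩ := h k x
  exact .of_norm_bounded hu hfu.self_of_nhds

theorem hasFDerivAt_tsum_iteratedFDeriv (h : LocallyDominatedIteratedFDeriv f)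
    (hf : ∀ i, ContDiff ℝ ∞ (f i)) (k : ℕ) (x : E) :
    HasFDerivAt (fun y => ∑' i, iteratedFDeriv ℝ k (f i) y)
      (∑' i, iteratedFDeriv ℝ (k + 1) (f i) x).curryLeft x := by
  obtain ⟨u, hu, hfu⟩ := h (k + 1) x
  obtain ⟨ε, hε, hball⟩ := Metric.eventually_nhds_iff_ball.1 hfu
  have hx : x ∈ Metric.ball x ε := Metric.mem_ball_self hε
  have hterm (i : ι) (y : E) : HasFDerivAt (iteratedFDeriv ℝ k (f i))
      (iteratedFDeriv ℝ (k + 1) (f i) y).curryLeft y :=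
    (hf i).ftaylorSeries.fderiv k (mod_cast ENat.natCast_lt_top k) y
  have hbound (i : ι) (y : E) (hy : y ∈ Metric.ball x ε) :
      ‖(iteratedFDeriv ℝ (k + 1) (f i) y).curryLeft‖ ≤ u i := by
    rw [ContinuousMultilinearMap.curryLeft_norm]
    exact hball y hy i
  have hcurry : (∑' i, iteratedFDeriv ℝ (k + 1) (f i) x).curryLeft =
      ∑' i, (iteratedFDeriv ℝ (k + 1) (f i) x).curryLeft :=
    (continuousMultilinearCurryLeftEquiv ℝ
      (fun _ : Fin (k + 1) => E) F).toContinuousLinearEquiv.map_tsum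
  rw [hcurry]
  exact hasFDerivAt_tsum_of_isPreconnected hu Metric.isOpen_ball
    (convex_ball x ε).isPreconnected (fun i y _ => hterm i y) hbound hx
    (h.summable_iteratedFDeriv k x) hx

theorem hasFTaylorSeriesUpTo_tsum (h : LocallyDominatedIteratedFDeriv f)
    (hf : ∀ i, ContDiff ℝ ∞ (f i)) :
    HasFTaylorSeriesUpTo ∞ (fun x => ∑' i, f i x)
      (fun x k => ∑' i, iteratedFDeriv ℝ k (f i) x) := by
  refine (hasFTaylorSeriesUpTo_top_iff' le_rfl).2
    ⟨fun x => ?_, h.hasFDerivAt_tsum_iteratedFDeriv hf⟩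
  rw [ContinuousMultilinearMap.curry0,
    ContinuousMultilinearMap.tsum_eval (h.summable_iteratedFDeriv 0 x)]
  simp only [iteratedFDeriv_zero_apply]

theorem contDiff_tsum (h : LocallyDominatedIteratedFDeriv f) (hf : ∀ i, ContDiff ℝ ∞ (f i)) :
    ContDiff ℝ ∞ fun x => ∑' i, f i x :=
  (h.hasFTaylorSeriesUpTo_tsum hf).contDiff

theorem hasSum_iteratedFDeriv_apply (h : LocallyDominatedIteratedFDeriv f)
    (hf : ∀ i, ContDiff ℝ ∞ (f i)) (k : ℕ) (x : E) (m : Fin k → E) :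
    HasSum (fun i => iteratedFDeriv ℝ k (f i) x m)
      (iteratedFDeriv ℝ k (fun y => ∑' i, f i y) x m) := by
  rw [← (h.hasFTaylorSeriesUpTo_tsum hf).eq_iteratedFDeriv (mod_cast le_top) x]
  exact ContinuousMultilinearMap.hasSum_eval (h.summable_iteratedFDeriv k x).hasSum m

end LocallyDominatedIteratedFDeriv

end TermwiseDifferentiation

section RidgeFunctions

variable {𝕜 : Type*} [NontriviallyNormedField 𝕜] [NormedAddCommGroup E] [NormedSpace 𝕜 E]
  [NormedAddCommGroup F] [NormedSpace 𝕜 F] {g : 𝕜 → F} {k : ℕ}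

theorem iteratedFDeriv_comp_functional_apply (hg : ContDiff 𝕜 k g) (ℓ : StrongDual 𝕜 E) (x : E)
    (m : Fin k → E) :
    iteratedFDeriv 𝕜 k (fun y => g (ℓ y)) x m = (∏ i, ℓ (m i)) • iteratedDeriv k g (ℓ x) := by
  change iteratedFDeriv 𝕜 k (g ∘ ℓ) x m = _
  rw [ℓ.iteratedFDeriv_comp_right hg x le_rfl,
    ContinuousMultilinearMap.compContinuousLinearMap_apply,
    iteratedFDeriv_apply_eq_iteratedDeriv_mul_prod]

theorem norm_iteratedFDeriv_comp_functional_le (hg : ContDiff 𝕜 k g) (ℓ : StrongDual 𝕜 E)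
    (x : E) :
    ‖iteratedFDeriv 𝕜 k (fun y => g (ℓ y)) x‖ ≤ ‖ℓ‖ ^ k * ‖iteratedDeriv k g (ℓ x)‖ := by
  refine ContinuousMultilinearMap.opNorm_le_bound (by positivity) fun m => ?_
  rw [iteratedFDeriv_comp_functional_apply hg, norm_smul, norm_prod]
  calc (∏ i, ‖ℓ (m i)‖) * ‖iteratedDeriv k g (ℓ x)‖
      ≤ (∏ i, ‖ℓ‖ * ‖m i‖) * ‖iteratedDeriv k g (ℓ x)‖ := by
        gcongr with i
        exact ℓ.le_opNorm (m i)
    _ = ‖ℓ‖ ^ k * ‖iteratedDeriv k g (ℓ x)‖ * ∏ i, ‖m i‖ := by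
        rw [Finset.prod_mul_distrib, Finset.prod_const, Finset.card_univ, Fintype.card_fin]
        ring

end RidgeFunctions

theorem cosh_le_exp_abs (x : ℝ) : Real.cosh x ≤ Real.exp |x| := by
  rw [← Real.cosh_abs, ← Real.cosh_add_sinh]
  exact le_add_of_nonneg_right (Real.sinh_nonneg_iff.2 (abs_nonneg x))

theorem abs_iteratedDeriv_cosh_le_cosh (k : ℕ) (x : ℝ) :
    |iteratedDeriv k Real.cosh x| ≤ Real.cosh x := by
  rcases Nat.even_or_odd' k with ⟨n, rfl | rfl⟩
  · rw [Real.iteratedDeriv_even_cosh, abs_of_pos (Real.cosh_pos x)]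
  · rw [Real.iteratedDeriv_odd_cosh, Real.abs_sinh, ← Real.cosh_abs]
    exact (Real.sinh_lt_cosh |x|).le

theorem pow_le_factorial_mul_exp {x : ℝ} (hx : 0 ≤ x) (k : ℕ) : x ^ k ≤ k ! * Real.exp x :=
  (div_le_iff₀' (by positivity)).1 (Real.pow_div_factorial_le_exp x hx k)

section CoshSeries

variable [NormedAddCommGroup E] [NormedSpace ℝ E] {a : ι → ℝ} {ℓ : ι → StrongDual ℝ E}

theorem contDiff_mul_cosh_functional (b : ℝ) (L : StrongDual ℝ E) {n : ℕ∞ω} :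
    ContDiff ℝ n fun x => b * Real.cosh (L x) :=
  contDiff_const.mul (Real.contDiff_cosh.comp L.contDiff)

theorem norm_iteratedFDeriv_mul_cosh_functional_le (b : ℝ) (L : StrongDual ℝ E) (k : ℕ) {R : ℝ}
    {x : E} (hx : ‖x‖ ≤ R) :
    ‖iteratedFDeriv ℝ k (fun y => b * Real.cosh (L y)) x‖ ≤
      k ! * (Real.exp ((R + 1) * ‖L‖) * |b|) := by
  have hcosh : |iteratedDeriv k Real.cosh (L x)| ≤ Real.exp (R * ‖L‖) := by
    refine (abs_iteratedDeriv_cosh_le_cosh k _).trans ((cosh_le_exp_abs _).trans ?_)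
    rw [Real.exp_le_exp, mul_comm, ← Real.norm_eq_abs]
    exact L.le_opNorm_of_le hx
  calc ‖iteratedFDeriv ℝ k (fun y => b * Real.cosh (L y)) x‖
      ≤ ‖L‖ ^ k * ‖iteratedDeriv k (fun t => b * Real.cosh t) (L x)‖ :=
        norm_iteratedFDeriv_comp_functional_le (contDiff_const.mul Real.contDiff_cosh) L x
    _ = ‖L‖ ^ k * (|b| * |iteratedDeriv k Real.cosh (L x)|) := by
        rw [iteratedDeriv_const_mul_field, Real.norm_eq_abs, abs_mul]
    _ ≤ k ! * Real.exp ‖L‖ * (|b| * Real.exp (R * ‖L‖)) := by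
        gcongr
        exact pow_le_factorial_mul_exp (norm_nonneg L) k
    _ = k ! * (Real.exp ((R + 1) * ‖L‖) * |b|) := by
        rw [add_mul, one_mul, Real.exp_add]
        ring

theorem iteratedFDeriv_two_mul_cosh_functional (b : ℝ) (L : StrongDual ℝ E) (x v : E) :
    iteratedFDeriv ℝ 2 (fun y => b * Real.cosh (L y)) x ![v, v] =
      b * Real.cosh (L x) * L v ^ 2 := by
  rw [iteratedFDeriv_comp_functional_apply (g := fun t => b * Real.cosh t)
      (contDiff_const.mul Real.contDiff_cosh) L, iteratedDeriv_const_mul_field,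
    Real.iteratedDeriv_even_cosh 1, Fin.prod_univ_two, smul_eq_mul]
  simp only [Matrix.cons_val_zero, Matrix.cons_val_one]
  ring

theorem locallyDominatedIteratedFDeriv_mul_cosh
    (h : ∀ c : ℝ, 0 < c → Summable fun i => Real.exp (c * ‖ℓ i‖) * |a i|) :
    LocallyDominatedIteratedFDeriv fun i x => a i * Real.cosh (ℓ i x) := by
  intro k x
  refine ⟨_, (h (‖x‖ + 1 + 1) (by positivity)).mul_left (k ! : ℝ), ?_⟩
  have hnear : ∀ᶠ y in 𝓝 x, ‖y‖ < ‖x‖ + 1 :=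
    continuous_norm.continuousAt.eventually_lt_const (lt_add_one ‖x‖)
  filter_upwards [hnear] with y hy i
  exact norm_iteratedFDeriv_mul_cosh_functional_le (a i) (ℓ i) k hy.le

theorem contDiff_tsum_mul_cosh
    (h : ∀ c : ℝ, 0 < c → Summable fun i => Real.exp (c * ‖ℓ i‖) * |a i|) :
    ContDiff ℝ ∞ fun x => ∑' i, a i * Real.cosh (ℓ i x) :=
  (locallyDominatedIteratedFDeriv_mul_cosh h).contDiff_tsum fun i =>
    contDiff_mul_cosh_functional (a i) (ℓ i)

theorem hasSum_iteratedFDeriv_two_tsum_mul_cosh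
    (h : ∀ c : ℝ, 0 < c → Summable fun i => Real.exp (c * ‖ℓ i‖) * |a i|) (x v : E) :
    HasSum (fun i => a i * Real.cosh (ℓ i x) * ℓ i v ^ 2)
      (iteratedFDeriv ℝ 2 (fun y => ∑' i, a i * Real.cosh (ℓ i y)) x ![v, v]) := by
  simpa only [iteratedFDeriv_two_mul_cosh_functional] using
    (locallyDominatedIteratedFDeriv_mul_cosh h).hasSum_iteratedFDeriv_apply
      (fun i => contDiff_mul_cosh_functional (a i) (ℓ i)) 2 x ![v, v]

theorem iteratedFDeriv_two_tsum_mul_cosh_zero_le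
    (h : ∀ c : ℝ, 0 < c → Summable fun i => Real.exp (c * ‖ℓ i‖) * |a i|)
    (ha : ∀ i, ℓ i ≠ 0 → 0 ≤ a i) (x v : E) :
    iteratedFDeriv ℝ 2 (fun y => ∑' i, a i * Real.cosh (ℓ i y)) 0 ![v, v] ≤
      iteratedFDeriv ℝ 2 (fun y => ∑' i, a i * Real.cosh (ℓ i y)) x ![v, v] := by
  refine hasSum_le (fun i => ?_) (hasSum_iteratedFDeriv_two_tsum_mul_cosh h 0 v)
    (hasSum_iteratedFDeriv_two_tsum_mul_cosh h x v)
  rcases eq_or_ne (ℓ i) 0 with hi | hi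
  · simp [hi]
  · have hai := ha i hi
    rw [map_zero, Real.cosh_zero]
    gcongr
    exact Real.one_le_cosh (ℓ i x)

theorem iteratedFDeriv_two_tsum_mul_cosh_pos
    (h : ∀ c : ℝ, 0 < c → Summable fun i => Real.exp (c * ‖ℓ i‖) * |a i|)
    (ha : ∀ i, ℓ i ≠ 0 → 0 ≤ a i) (x : E) {v : E} (hv : ∃ i, 0 < a i ∧ ℓ i v ≠ 0) :
    0 < iteratedFDeriv ℝ 2 (fun y => ∑' i, a i * Real.cosh (ℓ i y)) x ![v, v] := by
  obtain ⟨i, hai, hiv⟩ := hv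
  have hsum := hasSum_iteratedFDeriv_two_tsum_mul_cosh h x v
  have hnonneg (j : ι) : 0 ≤ a j * Real.cosh (ℓ j x) * ℓ j v ^ 2 := by
    rcases eq_or_ne (ℓ j) 0 with hj | hj
    · simp [hj]
    · have haj := ha j hj
      positivity
  rw [← hsum.tsum_eq]
  exact hsum.summable.tsum_pos hnonneg i (by positivity)

end CoshSeries

theorem exists_mul_norm_pow_le_of_pos [NormedAddCommGroup E] [NormedSpace ℝ E]
    [FiniteDimensional ℝ E] {n : ℕ} [NeZero n] (B : E [×n]→L[ℝ] ℝ)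
    (hB : ∀ v, v ≠ 0 → 0 < B fun _ => v) :
    ∃ α : ℝ, 0 < α ∧ ∀ v, α * ‖v‖ ^ n ≤ B fun _ => v := by
  have hcont : Continuous fun v => B fun _ => v := by fun_prop
  obtain ⟨α, hα, hsphere⟩ := (isCompact_sphere (0 : E) 1).exists_forall_le' hcont.continuousOn
    fun v hv => hB v (ne_zero_of_mem_unit_sphere ⟨v, hv⟩)
  refine ⟨α, hα, fun v => ?_⟩
  rcases eq_or_ne v 0 with rfl | hv
  · rw [B.map_coord_zero 0 rfl, norm_zero, zero_pow (NeZero.ne n), mul_zero]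
  · have hunit : ‖v‖⁻¹ • v ∈ Metric.sphere (0 : E) 1 := by
      rw [mem_sphere_zero_iff_norm, norm_smul, norm_inv, norm_norm,
        inv_mul_cancel₀ (norm_ne_zero_iff.2 hv)]
    calc α * ‖v‖ ^ n ≤ (B fun _ => ‖v‖⁻¹ • v) * ‖v‖ ^ n := by
          gcongr
          exact hsphere _ hunit
      _ = B fun _ => v := by
          rw [B.map_smul_univ, Finset.prod_const, Finset.card_univ, Fintype.card_fin, smul_eq_mul,
            inv_pow, mul_right_comm, inv_mul_cancel₀ (pow_ne_zero n (norm_ne_zero_iff.2 hv)),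
            one_mul]

theorem exists_mul_norm_sq_le_iteratedFDeriv_two_tsum_mul_cosh [NormedAddCommGroup E]
    [NormedSpace ℝ E] [FiniteDimensional ℝ E] {a : ι → ℝ} {ℓ : ι → StrongDual ℝ E}
    (h : ∀ c : ℝ, 0 < c → Summable fun i => Real.exp (c * ‖ℓ i‖) * |a i|)
    (ha : ∀ i, ℓ i ≠ 0 → 0 ≤ a i) (hsep : ∀ v, v ≠ 0 → ∃ i, 0 < a i ∧ ℓ i v ≠ 0) :
    ∃ α : ℝ, 0 < α ∧ ∀ x v : E, α * ‖v‖ ^ 2 ≤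
      iteratedFDeriv ℝ 2 (fun y => ∑' i, a i * Real.cosh (ℓ i y)) x ![v, v] := by
  have hdiag (v : E) : (fun _ : Fin 2 => v) = ![v, v] := funext (Fin.forall_fin_two.2 ⟨rfl, rfl⟩)
  obtain ⟨α, hα, hzero⟩ := exists_mul_norm_pow_le_of_pos
    (iteratedFDeriv ℝ 2 (fun y => ∑' i, a i * Real.cosh (ℓ i y)) 0) fun v hv => by
      rw [hdiag]
      exact iteratedFDeriv_two_tsum_mul_cosh_pos h ha 0 (hsep v hv)
  refine ⟨α, hα, fun x v => (hzero v).trans ?_⟩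
  rw [hdiag]
  exact iteratedFDeriv_two_tsum_mul_cosh_zero_le h ha x v

theorem exists_inner_ne_zero_of_span_eq_top {𝕜 : Type*} [RCLike 𝕜] [NormedAddCommGroup E]
    [InnerProductSpace 𝕜 E] {s : Set E} (hs : Submodule.span 𝕜 s = ⊤) {v : E} (hv : v ≠ 0) :
    ∃ w ∈ s, inner 𝕜 w v ≠ 0 := by
  contrapose! hv
  have hle : Submodule.span 𝕜 s ≤ (𝕜 ∙ v)ᗮ := Submodule.span_le.2 fun w hw =>
    Submodule.mem_orthogonal_singleton_iff_inner_left.2 (hv w hw)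
  have hmem : v ∈ (𝕜 ∙ v)ᗮ := hle (hs ▸ Submodule.mem_top)
  exact inner_self_eq_zero.1 (Submodule.mem_orthogonal_singleton_iff_inner_left.1 hmem)

theorem stmt11_general [NormedAddCommGroup E] [InnerProductSpace ℝ E] [FiniteDimensional ℝ E]
    (a : ι → ℝ) (w : ι → E) (hneg : ∀ i, w i ≠ 0 → a i ≤ 0)
    (hdecay : ∀ c : ℝ, 0 < c → Summable fun i => Real.exp (c * ‖w i‖) * |a i|)
    (hspan : Submodule.span ℝ {u : E | ∃ i, a i < 0 ∧ u = w i} = ⊤) :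
    ContDiff ℝ ∞ (fun ξ => -∑' i, a i * Real.cosh ⟪w i, ξ⟫) ∧
      ∃ α : ℝ, 0 < α ∧ ∀ ξ v : E, α * ‖v‖ ^ 2 ≤
        iteratedFDeriv ℝ 2 (fun ξ' => -∑' i, a i * Real.cosh ⟪w i, ξ'⟫) ξ ![v, v] := by
  have hseries (ξ : E) : -∑' i, a i * Real.cosh ⟪w i, ξ⟫ =
      ∑' i, -a i * Real.cosh (innerSL ℝ (w i) ξ) := by
    simp only [innerSL_apply_apply, neg_mul, tsum_neg]
  have hdecay' (c : ℝ) (hc : 0 < c) :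
      Summable fun i => Real.exp (c * ‖innerSL ℝ (w i)‖) * |-a i| := by
    simpa only [innerSL_apply_norm, abs_neg] using hdecay c hc
  have hnonneg (i : ι) (hi : innerSL ℝ (w i) ≠ 0) : 0 ≤ -a i :=
    neg_nonneg.2 (hneg i fun hw => hi (by rw [hw, map_zero]))
  have hsep (v : E) (hv : v ≠ 0) : ∃ i, 0 < -a i ∧ innerSL ℝ (w i) v ≠ 0 := by
    obtain ⟨_, ⟨i, hai, rfl⟩, hiv⟩ := exists_inner_ne_zero_of_span_eq_top hspan hv
    exact ⟨i, neg_pos.2 hai, hiv⟩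
  simp only [hseries]
  exact ⟨contDiff_tsum_mul_cosh hdecay',
    exists_mul_norm_sq_le_iteratedFDeriv_two_tsum_mul_cosh hdecay' hnonneg hsep⟩

theorem zv_zero (d : ℕ) : zv (0 : Fin d → ℤ) = 0 := by
  ext i
  simp [zv]

/-- Proposition 2.17 (single fibre): under the sign, symmetry, exponential decay and span
conditions on `ã`, the function `t̃(ξ) = -Σ_η ã_η cosh(η·ξ)` is smooth and hyperconvex:
its Hessian is bounded below by a positive multiple of the identity, uniformly in `ξ`. -/
theorem stmt11 (d : ℕ) (a : (Fin d → ℤ) → ℝ)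
    (hneg : ∀ η : Fin d → ℤ, η ≠ 0 → a η ≤ 0)
    (heven : ∀ η : Fin d → ℤ, a η = a (-η))
    (hdecay : ∀ c : ℝ, 0 < c →
      Summable (fun η : Fin d → ℤ => Real.exp (c * ‖zv η‖) * |a η|))
    (hspan : Submodule.span ℝ {w : Ed d | ∃ η : Fin d → ℤ, a η < 0 ∧ w = zv η} = ⊤) :
    ContDiff ℝ (⊤ : ℕ∞) (fun ξ : Ed d => -∑' η : Fin d → ℤ, a η * Real.cosh ⟪zv η, ξ⟫)
    ∧ ∃ α : ℝ, 0 < α ∧ ∀ ξ v : Ed d,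
        α * ‖v‖ ^ 2 ≤ iteratedFDeriv ℝ 2
          (fun ξ' : Ed d => -∑' η : Fin d → ℤ, a η * Real.cosh ⟪zv η, ξ'⟫) ξ ![v, v] := by
  exact stmt11_general a zv (fun η hη => hneg η fun h => hη (h ▸ zv_zero d)) hdecay hspan
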